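/- The function β is strictly increasing in each variable on the positive quadrant: for all real y > 0 and 0 < x₁ < x₂ one has β(x₁,y) < β(x₂,y), and for all real x > 0 and 0 < y₁ < y₂ one has β(x,y₁) < β(x,y₂). -/

import Mathlib

/-- The auxiliary function `β(x,y) = d₂(x,y)/d₀(x,y)` of the BDF3 analysis. -/
noncomputable def betaF (x y : ℝ) : ℝ :=
  x*(x + 1)^2*y^2 / ((y + 1)*(3*x^2*y + 4*x*y + 2*x + y + 1))

/-- The function `β` is strictly increasing in each variable on the positive quadrant. -/
theorem beta_strict_mono :
    (∀ y x₁ x₂ : ℝ, 0 < y → 0 < x₁ → x₁ < x₂ → betaF x₁ y < betaF x₂ y) ∧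
    (∀ x y₁ y₂ : ℝ, 0 < x → 0 < y₁ → y₁ < y₂ → betaF x y₁ < betaF x y₂) := by
  constructor
  · intro y a b hy ha hab
    obtain ⟨d, hd, rfl⟩ : ∃ d, 0 < d ∧ b = a + d := ⟨b - a, by linarith, by ring⟩
    unfold betaF
    rw [div_lt_div_iff₀ (by positivity) (by positivity), ← sub_pos]
    ring_nf
    positivity
  · intro x a b hx ha hab
    obtain ⟨d, hd, rfl⟩ : ∃ d, 0 < d ∧ b = a + d := ⟨b - a, by linarith, by ring⟩
    unfold betaF
    rw [div_lt_div_iff₀ (by positivity) (by positivity), ← sub_pos]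
    ring_nf
    positivity
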